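/- arXiv:2211.04407 — 4 statements merged into one kernel-verified Lean document; each statement's English description precedes it below -/
import Mathlib

section
/- For any integer L ≥ 2 and any points x₁, …, x_L ∈ ℝⁿ, the squared Chebyshev radius admits the minimax representation rad²(x₁,…,x_L) = max_{z ∈ Δ_L} ∑_{i=1}^L z(i)·‖x_i − y_z‖², where Δ_L := {z ∈ ℝ^L : z(i) ≥ 0 for all i, ∑_i z(i) = 1} is the probability simplex and y_z := ∑_{i=1}^L z(i)·x_i; moreover the maximum over Δ_L is attained. -/
/-!
By the parallel axis identity, for `z` in the simplex the weighted mean of `‖x i - y‖ ^ 2` is the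
weighted variance of `x` plus the squared distance from `y` to the barycenter of `z`. A mean is at
most the maximum, so every weighted variance is at most the squared radius.

Conversely, let `z` maximize the variance, with barycenter `c`. Moving from `z` a fraction `t`
of the way to the vertex `k` changes the variance `V` to `(1 - t) V + (1 - t) t ‖x k - c‖ ^ 2`.
Maximality gives `(1 - t) ‖x k - c‖ ^ 2 ≤ V`, and `t → 0` shows that the ball of squared radius `V`
about `c` contains every point.
-/

open Filter Topology Set

section ChebyshevRadius

variable {ι E : Type*} [SeminormedAddCommGroup E]

/-- The squared Chebyshev radius `rad²` of a family of points: the infimum of the squared radii of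
the balls containing all of them. It is meant for nonempty finite families: over `ℝ` an empty or
unbounded supremum is `0`. -/
noncomputable def sqChebyshevRadius (x : ι → E) : ℝ :=
  ⨅ y, ⨆ i, ‖x i - y‖ ^ 2

theorem sqChebyshevRadius_le [Nonempty ι] {x : ι → E} {r : ℝ} (y : E)
    (h : ∀ i, ‖x i - y‖ ^ 2 ≤ r) : sqChebyshevRadius x ≤ r := by
  have radii_bddBelow : BddBelow (range fun y ↦ ⨆ i, ‖x i - y‖ ^ 2) :=
    ⟨0, forall_mem_range.2 fun y ↦ Real.iSup_nonneg fun i ↦ sq_nonneg ‖x i - y‖⟩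
  exact (ciInf_le radii_bddBelow y).trans (ciSup_le h)

end ChebyshevRadius

section WeightedVariance

variable {ι E : Type*} [Fintype ι] [SeminormedAddCommGroup E] [InnerProductSpace ℝ E]

/-- The variance of the points `x i` under the weights `z i`, that is, the objective of the maximum
over the simplex. The weights are not normalized, so `Fintype.linearCombination ℝ x z` is the
barycenter only when they sum to `1`. -/
noncomputable def weightedVariance (x : ι → E) (z : ι → ℝ) : ℝ :=
  ∑ i, z i * ‖x i - Fintype.linearCombination ℝ x z‖ ^ 2

theorem sum_mul_norm_sub_sq_eq_weightedVariance_add (x : ι → E) {z : ι → ℝ} (hz : ∑ i, z i = 1)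
    (y : E) :
    ∑ i, z i * ‖x i - y‖ ^ 2 =
      weightedVariance x z + ‖Fintype.linearCombination ℝ x z - y‖ ^ 2 := by
  rw [weightedVariance]
  set c := Fintype.linearCombination ℝ x z with hc
  have expand (i : ι) : z i * ‖x i - y‖ ^ 2 =
      z i * ‖x i - c‖ ^ 2 + 2 * inner ℝ (z i • (x i - c)) (c - y) + z i * ‖c - y‖ ^ 2 := by
    rw [← sub_add_sub_cancel (x i) c y, norm_add_sq_real, real_inner_smul_left]
    ring
  have centered : ∑ i, z i • (x i - c) = 0 := by
    simp only [smul_sub, Finset.sum_sub_distrib, ← Finset.sum_smul, hz, one_smul]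
    rw [← Fintype.linearCombination_apply ℝ x z, ← hc, sub_self]
  simp only [expand, Finset.sum_add_distrib, ← Finset.mul_sum, ← Finset.sum_mul, ← sum_inner,
    centered, inner_zero_left, hz, mul_zero, add_zero, one_mul]

theorem weightedVariance_le_sqChebyshevRadius (x : ι → E) {z : ι → ℝ} (hz : z ∈ stdSimplex ℝ ι) :
    weightedVariance x z ≤ sqChebyshevRadius x := by
  refine le_ciInf fun y ↦ ?_
  calc weightedVariance x z
      ≤ weightedVariance x z + ‖Fintype.linearCombination ℝ x z - y‖ ^ 2 :=
        le_add_of_nonneg_right (sq_nonneg _)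
    _ = ∑ i, z i * ‖x i - y‖ ^ 2 := (sum_mul_norm_sub_sq_eq_weightedVariance_add x hz.2 y).symm
    _ ≤ ∑ i, z i * ⨆ j, ‖x j - y‖ ^ 2 := by
        gcongr with i
        · exact hz.1 i
        · exact le_ciSup (f := fun j ↦ ‖x j - y‖ ^ 2) (finite_range _).bddAbove i
    _ = ⨆ j, ‖x j - y‖ ^ 2 := by rw [← Finset.sum_mul, hz.2, one_mul]

@[fun_prop]
theorem continuous_weightedVariance (x : ι → E) : Continuous (weightedVariance x) := by
  unfold weightedVariance
  simp only [Fintype.linearCombination_apply]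
  fun_prop

@[simp]
theorem weightedVariance_single_one [DecidableEq ι] (x : ι → E) (k : ι) :
    weightedVariance x (Pi.single k 1) = 0 := by
  simp [weightedVariance, Fintype.linearCombination_apply_single, Pi.single_apply]

theorem weightedVariance_smul_add_smul (x : ι → E) {z w : ι → ℝ} (hz : ∑ i, z i = 1)
    (hw : ∑ i, w i = 1) {a b : ℝ} (hab : a + b = 1) :
    weightedVariance x (a • z + b • w) =
      a * weightedVariance x z + b * weightedVariance x w +
        a * b * ‖Fintype.linearCombination ℝ x w - Fintype.linearCombination ℝ x z‖ ^ 2 := by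
  set c := Fintype.linearCombination ℝ x z with hc
  set d := Fintype.linearCombination ℝ x w with hd
  have sum_mix : ∑ i, (a • z + b • w) i = 1 := by
    simp [Finset.sum_add_distrib, ← Finset.mul_sum, hz, hw, hab]
  have barycenter_mix : Fintype.linearCombination ℝ x (a • z + b • w) - c = b • (d - c) := by
    rw [map_add, map_smul, map_smul, ← hc, ← hd, eq_sub_of_add_eq hab]
    module
  have moment_mix : ∑ i, (a • z + b • w) i * ‖x i - c‖ ^ 2 =
      a * ∑ i, z i * ‖x i - c‖ ^ 2 + b * ∑ i, w i * ‖x i - c‖ ^ 2 := by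
    simp [add_mul, mul_assoc, Finset.sum_add_distrib, Finset.mul_sum]
  rw [sum_mul_norm_sub_sq_eq_weightedVariance_add x sum_mix,
    sum_mul_norm_sub_sq_eq_weightedVariance_add x hz,
    sum_mul_norm_sub_sq_eq_weightedVariance_add x hw, barycenter_mix, norm_smul, mul_pow,
    Real.norm_eq_abs, sq_abs, ← hc, ← hd, sub_self, norm_zero] at moment_mix
  linear_combination moment_mix - b * ‖d - c‖ ^ 2 * hab

theorem norm_sub_linearCombination_sq_le_of_isMaxOn {x : ι → E} {z : ι → ℝ}
    (hz : z ∈ stdSimplex ℝ ι) (hmax : IsMaxOn (weightedVariance x) (stdSimplex ℝ ι) z) (k : ι) :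
    ‖x k - Fintype.linearCombination ℝ x z‖ ^ 2 ≤ weightedVariance x z := by
  classical
  set c := Fintype.linearCombination ℝ x z with hc
  have perturb {t : ℝ} (ht : t ∈ Ioc (0 : ℝ) 1) :
      (1 - t) * ‖x k - c‖ ^ 2 ≤ weightedVariance x z := by
    have vertex_mem := single_mem_stdSimplex ℝ k
    have mix_le : weightedVariance x ((1 - t) • z + t • Pi.single k 1) ≤ weightedVariance x z :=
      hmax <| convex_stdSimplex ℝ ι hz vertex_mem (sub_nonneg.2 ht.2) ht.1.le
        (sub_add_cancel 1 t)
    rw [weightedVariance_smul_add_smul x hz.2 vertex_mem.2 (sub_add_cancel 1 t),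
      weightedVariance_single_one, Fintype.linearCombination_apply_single, one_smul, ← hc]
      at mix_le
    exact le_of_mul_le_mul_left (by linarith) ht.1
  have tendsto_perturb : Tendsto (fun t : ℝ ↦ (1 - t) * ‖x k - c‖ ^ 2) (𝓝[>] 0)
      (𝓝 (‖x k - c‖ ^ 2)) :=
    Continuous.tendsto' (by fun_prop) 0 _ (by simp) |>.mono_left nhdsWithin_le_nhds
  exact le_of_tendsto tendsto_perturb <|
    eventually_of_mem (Ioc_mem_nhdsGT zero_lt_one) fun _ ↦ perturb

theorem sq_chebyshev_radius_minimax_general [Nonempty ι] (x : ι → E) :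
    IsGreatest (weightedVariance x '' stdSimplex ℝ ι) (sqChebyshevRadius x) := by
  classical
  obtain ⟨z, hz, hmax⟩ := (isCompact_stdSimplex ℝ ι).exists_isMaxOn
    ⟨_, single_mem_stdSimplex ℝ (Classical.arbitrary ι)⟩
    (continuous_weightedVariance x).continuousOn
  have radius_le : sqChebyshevRadius x ≤ weightedVariance x z :=
    sqChebyshevRadius_le _ (norm_sub_linearCombination_sq_le_of_isMaxOn hz hmax)
  exact ⟨⟨z, hz, (weightedVariance_le_sqChebyshevRadius x hz).antisymm radius_le⟩,
    forall_mem_image.2 fun _ ↦ weightedVariance_le_sqChebyshevRadius x⟩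

end WeightedVariance

/-- The squared Chebyshev radius `rad² = ⨅ y, ⨆ i, ‖x i - y‖²` admits the
minimax representation `rad² = max_{z ∈ Δ_L} ∑ i, z i · ‖x i - y_z‖²`, where
`Δ_L` is the probability simplex and `y_z = ∑ i, z i • x i`; the maximum is attained. -/
theorem sq_chebyshev_radius_minimax (n L : ℕ) (hL : 2 ≤ L)
    (x : Fin L → EuclideanSpace ℝ (Fin n)) :
    IsGreatest
      {v : ℝ | ∃ z : Fin L → ℝ, (∀ i, 0 ≤ z i) ∧ (∑ i, z i = 1) ∧
        v = ∑ i, z i * ‖x i - ∑ j, z j • x j‖ ^ 2}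
      (⨅ y : EuclideanSpace ℝ (Fin n), ⨆ i, ‖x i - y‖ ^ 2) := by
  have : Nonempty (Fin L) := ⟨⟨0, by lia⟩⟩
  simpa only [image, stdSimplex, mem_ofPred_eq, and_assoc, eq_comm, sqChebyshevRadius,
    weightedVariance, Fintype.linearCombination_apply] using sq_chebyshev_radius_minimax_general x
end

section
/- For any integer L ≥ 2 and any real λ > 0, lim_{K→∞} K^{L−1} ∫_{[−1,1]^L} exp( −K² λ ( ∑_{i=1}^L t_i² − (1/L)(∑_{i=1}^L t_i)² ) ) dt = 2√L · (π/λ)^{(L−1)/2}, where the integral is with respect to L-dimensional Lebesgue measure. -/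
open Real

/-!
The quadratic form is the squared norm of the projection of `t` onto the hyperplane orthogonal to
the diagonal `ℝ ∙ (1, …, 1)`. For any subspace `U` of a Euclidean space, integrate along
`U × Uᗮ`: on each fibre `u + Uᗮ`, the Gaussian `exp (-K² λ ‖w‖²)` scaled by `K ^ dim Uᗮ` is an
approximate identity of mass `(π / λ) ^ (dim Uᗮ / 2)`, so in the limit `K → ∞` only the volume of
the slice of the domain by `U` survives. For the cube and the diagonal this slice is the segment
from `(-1, …, -1)` to `(1, …, 1)`, of length `2 √L`.
-/

open MeasureTheory Filter Topology Module

theorem tendsto_norm_pow_mul_exp_neg_mul_norm_sq_cobounded {V : Type*} [SeminormedAddCommGroup V]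
    {lam : ℝ} (hlam : 0 < lam) (n : ℕ) :
    Tendsto (fun v : V => ‖v‖ ^ n * exp (-lam * ‖v‖ ^ 2)) (Bornology.cobounded V) (𝓝 0) := by
  simpa [Function.comp_def] using (tendsto_rpow_abs_mul_exp_neg_mul_sq_cocompact hlam n).comp
    (tendsto_norm_cobounded_atTop.mono_right atTop_le_cocompact)

section Gaussian

variable {V E : Type*} [NormedAddCommGroup V] [InnerProductSpace ℝ V] [FiniteDimensional ℝ V]
  [MeasurableSpace V] [BorelSpace V] [NormedAddCommGroup E] [NormedSpace ℝ E] {lam : ℝ}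

theorem integrable_exp_neg_mul_norm_sq (hlam : 0 < lam) :
    Integrable fun v : V => exp (-lam * ‖v‖ ^ 2) := by
  apply Integrable.of_integral_ne_zero
  rw [GaussianFourier.integral_rexp_neg_mul_sq_norm hlam]
  positivity

theorem tendsto_pow_finrank_smul_integral_exp_neg_mul_norm_sq_smul [CompleteSpace E]
    (hlam : 0 < lam) {g : V → E} (hg : Integrable g) (hcont : ContinuousAt g 0) :
    Tendsto (fun K : ℝ => K ^ finrank ℝ V • ∫ v, exp (-(K ^ 2) * lam * ‖v‖ ^ 2) • g v)
      atTop (𝓝 ((π / lam) ^ (finrank ℝ V / 2 : ℝ) • g 0)) := by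
  set c : ℝ := (π / lam) ^ (finrank ℝ V / 2 : ℝ)
  have hc_pos : 0 < c := by positivity
  have hmass : ∫ v : V, c⁻¹ * exp (-lam * ‖v‖ ^ 2) = 1 := by
    rw [integral_const_mul, GaussianFourier.integral_rexp_neg_mul_sq_norm hlam,
      inv_mul_cancel₀ hc_pos.ne']
  have hdecay : Tendsto (fun v : V => ‖v‖ ^ finrank ℝ V * (c⁻¹ * exp (-lam * ‖v‖ ^ 2)))
      (Bornology.cobounded V) (𝓝 0) := by
    simpa [mul_left_comm] using
      (tendsto_norm_pow_mul_exp_neg_mul_norm_sq_cobounded hlam (finrank ℝ V)).const_mul c⁻¹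
  refine ((tendsto_integral_comp_smul_smul_of_integrable (fun v => by positivity) hmass hdecay hg
    hcont).const_smul c).congr fun K => ?_
  rw [← integral_smul, ← integral_smul]
  congr 1 with v
  have hexp : -lam * ‖K • v‖ ^ 2 = -(K ^ 2) * lam * ‖v‖ ^ 2 := by
    rw [norm_smul, mul_pow, norm_eq_abs, sq_abs]
    ring
  rw [smul_smul, smul_smul, hexp]
  field_simp

theorem pow_finrank_mul_integral_exp_neg_mul_norm_sq (hlam : 0 < lam) {K : ℝ} (hK : 0 < K) :
    K ^ finrank ℝ V * ∫ v : V, exp (-(K ^ 2) * lam * ‖v‖ ^ 2) =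
      (π / lam) ^ (finrank ℝ V / 2 : ℝ) := by
  rw [neg_mul, GaussianFourier.integral_rexp_neg_mul_sq_norm (by positivity),
    mul_comm (K ^ 2), ← div_div, div_rpow (by positivity) (by positivity),
    ← rpow_natCast_mul hK.le, Nat.cast_ofNat, mul_div_cancel₀ _ two_ne_zero, rpow_natCast,
    mul_div_cancel₀ _ (by positivity)]

theorem norm_pow_finrank_smul_integral_exp_neg_mul_norm_sq_smul_le (hlam : 0 < lam) {K : ℝ}
    (hK : 0 < K) {g : V → E} {C : ℝ} (hgC : ∀ v, ‖g v‖ ≤ C) :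
    ‖K ^ finrank ℝ V • ∫ v, exp (-(K ^ 2) * lam * ‖v‖ ^ 2) • g v‖ ≤
      (π / lam) ^ (finrank ℝ V / 2 : ℝ) * C := by
  have hint : Integrable fun v : V => exp (-(K ^ 2) * lam * ‖v‖ ^ 2) := by
    simpa only [neg_mul] using
      integrable_exp_neg_mul_norm_sq (V := V) (by positivity : 0 < K ^ 2 * lam)
  calc ‖K ^ finrank ℝ V • ∫ v, exp (-(K ^ 2) * lam * ‖v‖ ^ 2) • g v‖
      ≤ K ^ finrank ℝ V * ∫ v, exp (-(K ^ 2) * lam * ‖v‖ ^ 2) * C := by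
        rw [norm_smul, norm_of_nonneg (by positivity : 0 ≤ K ^ finrank ℝ V)]
        gcongr
        refine norm_integral_le_of_norm_le (hint.mul_const C) (.of_forall fun v => ?_)
        rw [norm_smul, norm_of_nonneg (exp_nonneg _)]
        gcongr
        exact hgC v
    _ = (π / lam) ^ (finrank ℝ V / 2 : ℝ) * C := by
        rw [integral_mul_const, ← mul_assoc, pow_finrank_mul_integral_exp_neg_mul_norm_sq hlam hK]

variable {Y : Type*} [MeasurableSpace Y] {μ : Measure Y}

theorem integrable_exp_neg_mul_norm_sq_smul (hlam : 0 < lam) (K : ℝ) {f : Y × V → E}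
    (hf : Integrable f (μ.prod volume)) :
    Integrable (fun p => exp (-(K ^ 2) * lam * ‖p.2‖ ^ 2) • f p) (μ.prod volume) := by
  refine hf.bdd_smul 1 (by fun_prop) (.of_forall fun p => ?_)
  rw [norm_of_nonneg (exp_nonneg _), exp_le_one_iff, neg_mul, neg_mul, neg_nonpos]
  positivity

theorem tendsto_pow_finrank_smul_integral_prod_exp_neg_mul_norm_sq_smul [SFinite μ]
    [CompleteSpace E] (hlam : 0 < lam) {f : Y × V → E} (hf : Integrable f (μ.prod volume))
    {bound : Y → ℝ} (hbound : Integrable bound μ) (hf_le : ∀ y v, ‖f (y, v)‖ ≤ bound y)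
    (hcont : ∀ᵐ y ∂μ, ContinuousAt (fun v => f (y, v)) 0) :
    Tendsto (fun K : ℝ =>
        K ^ finrank ℝ V • ∫ p, exp (-(K ^ 2) * lam * ‖p.2‖ ^ 2) • f p ∂μ.prod volume)
      atTop (𝓝 ((π / lam) ^ (finrank ℝ V / 2 : ℝ) • ∫ y, f (y, 0) ∂μ)) := by
  have hfubini (K : ℝ) :
      ∫ y, K ^ finrank ℝ V • (∫ v, exp (-(K ^ 2) * lam * ‖v‖ ^ 2) • f (y, v)) ∂μ =
        K ^ finrank ℝ V • ∫ p, exp (-(K ^ 2) * lam * ‖p.2‖ ^ 2) • f p ∂μ.prod volume := by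
    rw [integral_prod _ (integrable_exp_neg_mul_norm_sq_smul hlam K hf), integral_smul]
  rw [← integral_smul]
  refine Tendsto.congr hfubini (tendsto_integral_filter_of_dominated_convergence
    (fun y => (π / lam) ^ (finrank ℝ V / 2 : ℝ) * bound y) ?_ ?_ (hbound.const_mul _) ?_)
  · exact .of_forall fun K => (integrable_exp_neg_mul_norm_sq_smul hlam K
      hf).aestronglyMeasurable.integral_prod_right'.const_smul _
  · filter_upwards [eventually_gt_atTop 0] with K hK
    exact .of_forall fun y =>
      norm_pow_finrank_smul_integral_exp_neg_mul_norm_sq_smul_le hlam hK (hf_le y)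
  · filter_upwards [hcont, hf.prod_right_ae] with y hy_cont hy_int
    exact tendsto_pow_finrank_smul_integral_exp_neg_mul_norm_sq_smul hlam hy_int hy_cont

end Gaussian

section Subspace

variable {F E : Type*} [NormedAddCommGroup F] [InnerProductSpace ℝ F]

theorem norm_starProjection_orthogonal_span_singleton_sq (v x : F) :
    ‖(ℝ ∙ v)ᗮ.starProjection x‖ ^ 2 = ‖x‖ ^ 2 - inner ℝ v x ^ 2 / ‖v‖ ^ 2 := by
  have hline : ‖(ℝ ∙ v).starProjection x‖ ^ 2 = inner ℝ v x ^ 2 / ‖v‖ ^ 2 := by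
    rw [Submodule.starProjection_singleton, norm_smul, mul_pow, norm_eq_abs, sq_abs]
    simp only [RCLike.ofReal_real_eq_id, id_eq]
    field_simp
  rw [(ℝ ∙ v).norm_sq_eq_add_norm_sq_starProjection x, hline, add_sub_cancel_left]

variable [MeasurableSpace F] [BorelSpace F]

theorem volume_span_singleton {v : F} (hv : v ≠ 0) :
    (volume : Measure (ℝ ∙ v)) = ‖v‖ₑ • (volume : Measure ℝ).map
      (fun x => x • (⟨v, Submodule.mem_span_singleton_self v⟩ : ℝ ∙ v)) :=
  volume_eq_of_finrank_eq_one (finrank_span_singleton hv) (v := ⟨v, _⟩)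
    fun h => hv (congrArg Subtype.val h)

theorem volume_real_span_singleton {v : F} (hv : v ≠ 0) {S : Set F} (hS : MeasurableSet S) :
    volume.real {u : (ℝ ∙ v) | (u : F) ∈ S} = ‖v‖ * volume.real {x : ℝ | x • v ∈ S} := by
  have hslice : MeasurableSet {u : (ℝ ∙ v) | (u : F) ∈ S} := hS.preimage measurable_subtype_coe
  rw [volume_span_singleton hv, measureReal_ennreal_smul_apply,
    map_measureReal_apply (by fun_prop) hslice, toReal_enorm]
  rfl

theorem ae_span_singleton_of_ae {v : F} (hv : v ≠ 0) {S : Set F} (hS : MeasurableSet S)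
    (h : ∀ᵐ x : ℝ, x • v ∈ S) : ∀ᵐ u : (ℝ ∙ v), (u : F) ∈ S := by
  rw [volume_span_singleton hv]
  refine Measure.ae_smul_measure ?_ _
  rwa [ae_map_iff (by fun_prop) (hS.preimage measurable_subtype_coe)]

variable [FiniteDimensional ℝ F] [NormedAddCommGroup E] [NormedSpace ℝ E] {lam : ℝ}

theorem measurePreserving_measurableEquivProd_zero (U : Submodule ℝ F) :
    MeasurePreserving (U.measurableEquivProd (0 : F)) := by
  simpa only [InnerProductSpace.euclideanHausdorffMeasure_eq_volume] using
    U.measurePreserving_measurableEquivProd (0 : F)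

theorem tendsto_pow_smul_integral_exp_neg_mul_norm_starProjection_sq_smul [CompleteSpace E]
    (hlam : 0 < lam) (U : Submodule ℝ F) {g : F → E} (hg : Integrable g) {bound : U → ℝ}
    (hbound : Integrable bound) (hg_le : ∀ x, ‖g x‖ ≤ bound (U.orthogonalProjectionOnto x))
    (hcont : ∀ᵐ u : U, ContinuousAt g u) :
    Tendsto (fun K : ℝ =>
        K ^ finrank ℝ Uᗮ • ∫ x, exp (-(K ^ 2) * lam * ‖Uᗮ.starProjection x‖ ^ 2) • g x)
      atTop (𝓝 ((π / lam) ^ (finrank ℝ Uᗮ / 2 : ℝ) • ∫ u : U, g u)) := by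
  have hmp := measurePreserving_measurableEquivProd_zero U
  have hlim := tendsto_pow_finrank_smul_integral_prod_exp_neg_mul_norm_sq_smul (V := Uᗮ)
    (f := g ∘ (U.measurableEquivProd (0 : F)).symm) hlam
    ((hmp.symm.integrable_comp_emb (MeasurableEquiv.measurableEmbedding _)).2 hg) hbound ?_ ?_
  · simp only [Function.comp_apply, Submodule.measurableEquivProd_symm_apply,
      ZeroMemClass.coe_zero, vadd_eq_add, add_zero] at hlim
    refine hlim.congr fun K => ?_
    rw [← Measure.volume_eq_prod, ← hmp.integral_comp']
    simp
  · intro u w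
    simpa [Submodule.orthogonalProjectionOnto_apply_of_mem_orthogonal w.2] using hg_le (u + w)
  · filter_upwards [hcont] with u hu
    simp only [Function.comp_apply, Submodule.measurableEquivProd_symm_apply, vadd_eq_add, add_zero]
    refine ContinuousAt.comp (g := g) ?_ (by fun_prop)
    simpa

theorem tendsto_pow_mul_setIntegral_exp_neg_mul_norm_starProjection_sq (hlam : 0 < lam)
    (U : Submodule ℝ F) {S : Set F} (hS : MeasurableSet S) (hS_bdd : Bornology.IsBounded S)
    (hfrontier : ∀ᵐ u : U, (u : F) ∉ frontier S) :
    Tendsto (fun K : ℝ =>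
        K ^ finrank ℝ Uᗮ * ∫ x in S, exp (-(K ^ 2) * lam * ‖Uᗮ.starProjection x‖ ^ 2))
      atTop (𝓝 ((π / lam) ^ (finrank ℝ Uᗮ / 2 : ℝ) * volume.real {u : U | (u : F) ∈ S})) := by
  obtain ⟨R, hR⟩ := hS_bdd.subset_closedBall 0
  have hlim := tendsto_pow_smul_integral_exp_neg_mul_norm_starProjection_sq_smul hlam U
    (g := S.indicator (1 : F → ℝ)) (bound := (Metric.closedBall 0 R).indicator 1) ?_ ?_ ?_ ?_
  · have hslice : ∫ u : U, S.indicator (1 : F → ℝ) u = volume.real {u : U | (u : F) ∈ S} :=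
      integral_indicator_one (hS.preimage measurable_subtype_coe)
    rw [hslice] at hlim
    refine hlim.congr fun K => ?_
    rw [← integral_indicator hS, smul_eq_mul]
    congr 2 with x
    by_cases hx : x ∈ S <;> simp only [hx, Set.indicator_of_mem, Set.indicator_of_notMem,
      not_false_iff, Pi.one_apply, smul_eq_mul, mul_one, mul_zero]
  · exact (integrable_indicator_iff hS).2 (integrableOn_const hS_bdd.measure_lt_top.ne)
  · exact (integrable_indicator_iff measurableSet_closedBall).2
      (integrableOn_const measure_closedBall_lt_top.ne)
  · intro x
    by_cases hx : x ∈ S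
    · have hproj : U.orthogonalProjectionOnto x ∈ Metric.closedBall 0 R :=
        mem_closedBall_zero_iff.2 <| (U.norm_orthogonalProjectionOnto_apply_le x).trans <|
          mem_closedBall_zero_iff.1 (hR hx)
      simp only [Set.indicator_of_mem hx, Set.indicator_of_mem hproj, Pi.one_apply, norm_one,
        le_rfl]
    · simp [hx, Set.indicator_nonneg]
  · filter_upwards [hfrontier] with u hu
    exact continuousOn_const.continuousAt_indicator hu

theorem tendsto_pow_mul_setIntegral_exp_neg_mul_norm_starProjection_span_sq (hlam : 0 < lam)
    {v : F} (hv : v ≠ 0) {S : Set F} (hS : MeasurableSet S) (hS_bdd : Bornology.IsBounded S)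
    (hfrontier : ∀ᵐ x : ℝ, x • v ∉ frontier S) :
    Tendsto (fun K : ℝ => K ^ (finrank ℝ F - 1) *
        ∫ x in S, exp (-(K ^ 2) * lam * ‖(ℝ ∙ v)ᗮ.starProjection x‖ ^ 2))
      atTop (𝓝 ((π / lam) ^ (((finrank ℝ F : ℝ) - 1) / 2) *
        (‖v‖ * volume.real {x : ℝ | x • v ∈ S}))) := by
  have hdim : finrank ℝ F = finrank ℝ (ℝ ∙ v)ᗮ + 1 := by
    rw [← (ℝ ∙ v).finrank_add_finrank_orthogonal, finrank_span_singleton hv, add_comm]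
  rw [hdim, Nat.add_sub_cancel, Nat.cast_add_one, add_sub_cancel_right,
    ← volume_real_span_singleton hv hS]
  exact tendsto_pow_mul_setIntegral_exp_neg_mul_norm_starProjection_sq hlam (ℝ ∙ v) hS hS_bdd
    (ae_span_singleton_of_ae hv isClosed_frontier.measurableSet.compl hfrontier)

end Subspace

section Diagonal

theorem setOf_const_mem_Icc {ι α : Type*} [Nonempty ι] [Preorder α] (a b : α) :
    {x : α | (fun _ : ι => x) ∈ Set.Icc (fun _ => a) (fun _ => b)} = Set.Icc a b := by
  ext x
  simp [Pi.le_def]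

theorem ae_const_notMem_frontier_Icc {ι : Type*} [Finite ι] (a b : ι → ℝ) :
    ∀ᵐ x : ℝ, (fun _ => x) ∉ frontier (Set.Icc a b) := by
  filter_upwards [ae_all_iff.2 fun i => Measure.ae_ne volume (a i),
    ae_all_iff.2 fun i => Measure.ae_ne volume (b i)] with x hxa hxb
  rw [isClosed_Icc.frontier_eq, ← Set.pi_univ_Icc, interior_pi_set Set.finite_univ]
  simp only [interior_Icc]
  rintro ⟨hmem, hnotMem⟩
  exact hnotMem fun i hi =>
    ⟨lt_of_le_of_ne (hmem i hi).1 (hxa i).symm, lt_of_le_of_ne (hmem i hi).2 (hxb i)⟩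

variable {ι : Type*} [Fintype ι]

theorem norm_starProjection_orthogonal_span_toLp_one_sq (t : EuclideanSpace ℝ ι) :
    ‖(ℝ ∙ (WithLp.toLp 2 1 : EuclideanSpace ℝ ι))ᗮ.starProjection t‖ ^ 2 =
      ∑ i, t i ^ 2 - (Fintype.card ι : ℝ)⁻¹ * (∑ i, t i) ^ 2 := by
  rw [norm_starProjection_orthogonal_span_singleton_sq]
  simp [EuclideanSpace.norm_sq_eq, PiLp.inner_apply, div_eq_inv_mul]

theorem laplace_asymptotics_degenerate_quadratic_form_general [Nonempty ι] {lam : ℝ}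
    (hlam : 0 < lam) {S : Set (ι → ℝ)} (hS : MeasurableSet S) (hS_bdd : Bornology.IsBounded S)
    (hfrontier : ∀ᵐ x : ℝ, (fun _ => x) ∉ frontier S) :
    Tendsto (fun K : ℝ => K ^ (Fintype.card ι - 1) * ∫ t in S,
        exp (-(K ^ 2) * lam * (∑ i, t i ^ 2 - (Fintype.card ι : ℝ)⁻¹ * (∑ i, t i) ^ 2)))
      atTop (𝓝 (volume.real {x : ℝ | (fun _ => x) ∈ S} * √(Fintype.card ι) *
        (π / lam) ^ (((Fintype.card ι : ℝ) - 1) / 2))) := by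
  set one : EuclideanSpace ℝ ι := WithLp.toLp 2 1
  have hone : one ≠ 0 := by simp [one]
  have hnorm : ‖one‖ = √(Fintype.card ι) := by simp [one, EuclideanSpace.norm_eq]
  have hdiag (x : ℝ) : (x • one).ofLp = fun _ => x := by ext; simp [one]
  have hfrontier_preimage : frontier (WithLp.ofLp ⁻¹' S : Set (EuclideanSpace ℝ ι)) =
      WithLp.ofLp ⁻¹' frontier S :=
    ((PiLp.homeomorph 2 _).preimage_frontier S).symm
  have hlim := tendsto_pow_mul_setIntegral_exp_neg_mul_norm_starProjection_span_sq hlam hone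
    (hS.preimage (PiLp.volume_preserving_ofLp ι).measurable)
    ((PiLp.antilipschitzWith_ofLp 2 fun _ : ι => ℝ).isBounded_preimage hS_bdd)
    (by simpa only [hfrontier_preimage, Set.mem_preimage, hdiag] using hfrontier)
  simp only [finrank_euclideanSpace, Set.mem_preimage, hnorm, hdiag] at hlim
  convert hlim using 2 with K
  · simp only [one, norm_starProjection_orthogonal_span_toLp_one_sq]
    exact congrArg _ ((EuclideanSpace.volume_preserving_symm_measurableEquiv_toLp
      ι).setIntegral_preimage_emb (MeasurableEquiv.measurableEmbedding _) _ S).symm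
  · ring

end Diagonal

/-- For `L ≥ 2` and `λ > 0`,
`lim_{K → ∞} K^(L-1) ∫_{[-1,1]^L} exp(-K² λ (∑ i, t i ^ 2 - (1/L)(∑ i, t i)^2)) dt
  = 2 √L (π/λ)^((L-1)/2)`. -/
theorem laplace_asymptotics_degenerate_quadratic_form (L : ℕ) (hL : 2 ≤ L)
    (lam : ℝ) (hlam : 0 < lam) :
    Filter.Tendsto
      (fun K : ℝ => K ^ (L - 1) *
        ∫ t : Fin L → ℝ in Set.Icc (fun _ => (-1 : ℝ)) (fun _ => (1 : ℝ)),
          Real.exp (-(K ^ 2) * lam * (∑ i, t i ^ 2 - (L : ℝ)⁻¹ * (∑ i, t i) ^ 2)))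
      Filter.atTop
      (nhds (2 * Real.sqrt L * (Real.pi / lam) ^ (((L : ℝ) - 1) / 2))) := by
  have : Nonempty (Fin L) := ⟨0, by lia⟩
  have hlim := laplace_asymptotics_degenerate_quadratic_form_general hlam measurableSet_Icc
    (Metric.isBounded_Icc _ _) (ae_const_notMem_frontier_Icc (fun _ : Fin L => -1) fun _ => 1)
  rwa [setOf_const_mem_Icc, volume_real_Icc_of_le (by norm_num), sub_neg_eq_add,
    one_add_one_eq_two, Fintype.card_fin] at hlim
end

section
/- Let N > 0, let L ≥ 2 be an integer, and let C ⊆ ℝⁿ be an (N, L−1)-multiple packing. Then for every P > 0: (i) the set C ∩ B̄(0, √(nP)) is finite; (ii) λ( ⋃_{x∈C} B̄(x, √(nN)) ∩ B̄(0, √(nP)) ) ≤ |C ∩ B̄(0, √(nP) + √(nN))| · λ(B̄(0, √(nN))); and (iii) λ( ⋃_{x∈C} B̄(x, √(nN)) ∩ B̄(0, √(nP)) ) ≥ (1/(L−1)) ∑_{x ∈ C ∩ B̄(0, √(nP))} λ( B̄(x, √(nN)) ∩ B̄(0, √(nP)) ), where λ is the n-dimensional Lebesgue measure. -/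
open MeasureTheory

/-! The upper bound is a union bound: a ball of radius `r` around `x` can meet `B̄(z, R)` only if
`x ∈ B̄(z, R + r)`, and all balls of radius `r` have the same volume. For the lower bound,
integrate the number of balls covering a point over the union: this number never exceeds the
multiplicity. Finiteness comes from covering a compact set by finitely many balls of radius `r`:
each point of the packing in that set is within `r` of one of the finitely many centers, and each
center is within `r` of only boundedly many points of the packing. -/

section

open Metric Topology

section PseudoMetricSpace

variable {X : Type*} [PseudoMetricSpace X]

/-- `C` is a multiple packing of multiplicity `m` at radius `r`: no point lies in more than `m` of
the closed balls of radius `r` centered at points of `C`. An `(N, L - 1)`-multiple packing of `ℝⁿ`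
is the case `r = √(nN)`, `m = L - 1`. Counting with `Set.encard` makes infinitely many balls
through a point a violation. -/
def IsMultiplePacking (r : ℝ) (m : ℕ) (C : Set X) : Prop :=
  ∀ y, {x ∈ C | y ∈ closedBall x r}.encard ≤ m

namespace IsMultiplePacking

variable {C : Set X} {r : ℝ} {m : ℕ}

theorem finite_inter_of_isCompact (hC : IsMultiplePacking r m C) {K : Set X} (hK : IsCompact K)
    (hr : ∀ x ∈ K, closedBall x r ∈ 𝓝 x) : (C ∩ K).Finite := by
  obtain ⟨t, -, hKt⟩ := hK.elim_nhds_subcover (closedBall · r) hr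
  have hfin : (⋃ y ∈ t, {x ∈ C | y ∈ closedBall x r}).Finite :=
    t.finite_toSet.biUnion fun y _ => Set.finite_of_encard_le_coe (hC y)
  refine hfin.subset fun x ⟨hxC, hxK⟩ => ?_
  obtain ⟨y, hyt, hxy⟩ := Set.mem_iUnion₂.1 (hKt hxK)
  exact Set.mem_biUnion hyt ⟨hxC, mem_closedBall_comm.1 hxy⟩

theorem encard_setOf_subtype_le (hC : IsMultiplePacking r m C) (y : X) :
    {x : C | y ∈ closedBall (x : X) r}.encard ≤ m := by
  rw [← Subtype.val_injective.encard_image]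
  refine (Set.encard_le_encard ?_).trans (hC y)
  rintro _ ⟨x, hxy, rfl⟩
  exact ⟨x.2, hxy⟩

theorem tsum_measure_closedBall_inter_le [MeasurableSpace X] [OpensMeasurableSpace X]
    (hC : IsMultiplePacking r m C) (μ : Measure X) {B : Set X} (hB : MeasurableSet B) :
    ∑' x : C, μ (closedBall (x : X) r ∩ B) ≤ m * μ (⋃ x ∈ C, closedBall x r ∩ B) :=
  calc
    ∑' x : C, μ (closedBall (x : X) r ∩ B)
      = Measure.sum (fun x : C => μ.restrict (closedBall (x : X) r)) B := by
        simp only [Measure.sum_apply _ hB, Measure.restrict_apply hB, Set.inter_comm B]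
    _ ≤ (m • μ.restrict (⋃ x : C, closedBall (x : X) r)) B :=
        Measure.sum_restrict_le (fun _ => measurableSet_closedBall) hC.encard_setOf_subtype_le B
    _ = m * μ (⋃ x ∈ C, closedBall x r ∩ B) := by
        rw [Measure.smul_apply, nsmul_eq_mul, Measure.restrict_apply hB, Set.inter_comm,
          Set.iUnion_inter, Set.biUnion_eq_iUnion]

end IsMultiplePacking

theorem biUnion_closedBall_inter_closedBall_subset (C : Set X) (r R : ℝ) (z : X) :
    ⋃ x ∈ C, closedBall x r ∩ closedBall z R ⊆
      ⋃ x ∈ C ∩ closedBall z (R + r), closedBall x r := by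
  refine Set.iUnion₂_subset fun x hxC y ⟨hyx, hyz⟩ => Set.mem_biUnion ⟨hxC, ?_⟩ hyx
  rw [add_comm]
  exact (dist_triangle_left x z y).trans (add_le_add hyx hyz)

end PseudoMetricSpace

section NormedAddCommGroup

variable {E : Type*} [NormedAddCommGroup E] [MeasurableSpace E] [BorelSpace E]
  (μ : Measure E) [μ.IsAddHaarMeasure] {C : Set E} {r R : ℝ} {z : E}

theorem measure_biUnion_closedBall_inter_closedBall_le
    (hC : (C ∩ closedBall z (R + r)).Countable) :
    μ (⋃ x ∈ C, closedBall x r ∩ closedBall z R) ≤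
      (C ∩ closedBall z (R + r)).encard * μ (closedBall 0 r) :=
  calc
    μ (⋃ x ∈ C, closedBall x r ∩ closedBall z R)
      ≤ μ (⋃ x ∈ C ∩ closedBall z (R + r), closedBall x r) :=
        measure_mono (biUnion_closedBall_inter_closedBall_subset C r R z)
    _ ≤ ∑' x : ↥(C ∩ closedBall z (R + r)), μ (closedBall (x : E) r) :=
        measure_biUnion_le μ hC _
    _ = (C ∩ closedBall z (R + r)).encard * μ (closedBall 0 r) := by
        simp only [Measure.addHaar_closedBall_center, ENNReal.tsum_set_const]

/-- The neighborhood condition, rather than `0 < r`, also covers `r = 0` in a discrete group, such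
as `√(nN)` when `n = 0`. -/
theorem multiple_packing_volume_bounds_general [ProperSpace E] {m : ℕ}
    (hC : IsMultiplePacking r m C) (hr : ∀ x : E, closedBall x r ∈ 𝓝 x) (R : ℝ) (z : E) :
    (C ∩ closedBall z R).Finite ∧
    μ (⋃ x ∈ C, closedBall x r ∩ closedBall z R) ≤
      (C ∩ closedBall z (R + r)).encard * μ (closedBall 0 r) ∧
    (m : ENNReal)⁻¹ * ∑' x : ↥(C ∩ closedBall z R), μ (closedBall (x : E) r ∩ closedBall z R) ≤
      μ (⋃ x ∈ C, closedBall x r ∩ closedBall z R) := by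
  have finite_inter (ρ : ℝ) : (C ∩ closedBall z ρ).Finite :=
    hC.finite_inter_of_isCompact (isCompact_closedBall z ρ) fun x _ => hr x
  refine ⟨finite_inter R,
    measure_biUnion_closedBall_inter_closedBall_le μ (finite_inter (R + r)).countable, ?_⟩
  rw [← ENNReal.div_eq_inv_mul]
  refine ENNReal.div_le_of_le_mul' ?_
  calc
    ∑' x : ↥(C ∩ closedBall z R), μ (closedBall (x : E) r ∩ closedBall z R)
      ≤ ∑' x : C, μ (closedBall (x : E) r ∩ closedBall z R) :=
        ENNReal.tsum_mono_subtype (fun x => μ (closedBall x r ∩ closedBall z R))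
          Set.inter_subset_left
    _ ≤ m * μ (⋃ x ∈ C, closedBall x r ∩ closedBall z R) :=
        hC.tsum_measure_closedBall_inter_le μ measurableSet_closedBall

end NormedAddCommGroup

theorem closedBall_sqrt_mul_mem_nhds (n : ℕ) {N : ℝ} (hN : 0 < N)
    (x : EuclideanSpace ℝ (Fin n)) : closedBall x √(n * N) ∈ 𝓝 x := by
  rcases n.eq_zero_or_pos with rfl | hn
  · exact mem_nhds_discrete.2 (mem_closedBall_self (Real.sqrt_nonneg _))
  · exact closedBall_mem_nhds x (by positivity)

end

/-- For an `(N, L-1)`-multiple packing `C ⊆ ℝⁿ` (every point lies in at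
most `L - 1` of the closed balls of radius `√(nN)` around points of `C`) and every
`P > 0`: (i) `C ∩ B̄(0, √(nP))` is finite; (ii) the volume of
`⋃_{x ∈ C} (B̄(x, √(nN)) ∩ B̄(0, √(nP)))` is at most
`|C ∩ B̄(0, √(nP) + √(nN))| · vol(B̄(0, √(nN)))`; and (iii) it is at least
`1/(L-1)` times `∑_{x ∈ C ∩ B̄(0, √(nP))} vol(B̄(x, √(nN)) ∩ B̄(0, √(nP)))`. -/
theorem multiple_packing_volume_bounds (n L : ℕ) (hL : 2 ≤ L) (N P : ℝ)
    (hN : 0 < N) (hP : 0 < P) (C : Set (EuclideanSpace ℝ (Fin n)))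
    (hC : ∀ y : EuclideanSpace ℝ (Fin n),
      {x ∈ C | y ∈ Metric.closedBall x (Real.sqrt (n * N))}.encard ≤ (L : ℕ∞) - 1) :
    (C ∩ Metric.closedBall 0 (Real.sqrt (n * P))).Finite ∧
    volume (⋃ x ∈ C,
        Metric.closedBall x (Real.sqrt (n * N)) ∩ Metric.closedBall 0 (Real.sqrt (n * P)))
      ≤ ((C ∩ Metric.closedBall 0 (Real.sqrt (n * P) + Real.sqrt (n * N))).encard :
            ENNReal) *
        volume (Metric.closedBall (0 : EuclideanSpace ℝ (Fin n)) (Real.sqrt (n * N))) ∧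
    ((L : ENNReal) - 1)⁻¹ *
        ∑' x : ↥(C ∩ Metric.closedBall 0 (Real.sqrt (n * P))),
          volume (Metric.closedBall (x : EuclideanSpace ℝ (Fin n)) (Real.sqrt (n * N))
            ∩ Metric.closedBall 0 (Real.sqrt (n * P)))
      ≤ volume (⋃ x ∈ C,
          Metric.closedBall x (Real.sqrt (n * N))
            ∩ Metric.closedBall 0 (Real.sqrt (n * P))) := by
  have packing : IsMultiplePacking √(n * N) (L - 1) C := fun y => mod_cast hC y
  exact_mod_cast multiple_packing_volume_bounds_general volume packing
    (closedBall_sqrt_mul_mem_nhds n hN) √(n * P) 0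
end

section
/- Let N > 0, let L ≥ 2 be an integer, and let ε > 0. Then there exists n₀ such that for every n ≥ n₀ there exist K > 0 and a finite set C ⊆ [−K, K]^n ⊆ ℝⁿ such that every L-element subset of C has average squared radius strictly greater than nN, and the normalized logarithmic density satisfies (1/n)·ln( |C| / (2K)^n ) ≥ (1/2)·ln( (L−1)/(2πeNL) ) − (ln L)/(2(L−1)) − ε. -/
/-!
Take `M` points independently and uniformly in a cube `A`. A Gaussian integral over an auxiliary
center `t` makes the exponential moment of the average squared radius of `L` of them a mixture of
product expectations, because `∑ i, ‖t - x i‖ ^ 2` is `L` times the sum of the average squared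
radius and the squared distance from `t` to the centroid. Chernoff's bound with parameter
`(L - 1) / (2 * N * L)` then shows that an `L`-tuple has average squared radius at most `n * N`
with probability at most `(vol A * exp (n * ν)) ^ (-(L - 1))`, where `ν` is the target density.
If `2 * M` is at most `vol A * exp (n * ν)`, the expected number of such tuples is at most
`M / 2`, and deleting one point from each leaves a good code. The side of the cube is chosen so
that `vol A * exp (n * ν)` is exactly `2 ^ n`.
-/

open MeasureTheory ProbabilityTheory Module
open Fintype (card)
open scoped ENNReal Finset

section Expurgation

variable {ι κ α : Type*} [Fintype ι]

theorem exists_finset_forall_embedding_notMem [Nonempty κ] (T : Finset (κ ↪ ι)) :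
    ∃ S : Finset ι, (∀ e : κ ↪ ι, (∀ k, e k ∈ S) → e ∉ T) ∧ card ι ≤ #T + #S := by
  classical
  obtain ⟨k₀⟩ := ‹Nonempty κ›
  let hit : Finset ι := T.image fun e => e k₀
  refine ⟨hitᶜ, fun e he heT => ?_, ?_⟩
  · exact Finset.mem_compl.1 (he k₀) (Finset.mem_image_of_mem _ heT)
  · have hcard : #hit ≤ #T := Finset.card_image_le
    have hcompl := Finset.card_add_card_compl hit
    omega

variable [Fintype κ]

open Classical in
theorem exists_finset_forall_injective_notMem [Nonempty κ] (x : ι → α) {B : Set (κ → α)}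
    (hB : ∀ a, Function.const κ a ∈ B) :
    ∃ C : Finset α, (C : Set α) ⊆ Set.range x ∧
      (∀ y : κ → α, Function.Injective y → (∀ k, y k ∈ C) → y ∉ B) ∧
      card ι ≤ #{e : κ ↪ ι | x ∘ e ∈ B} + card κ * #C := by
  obtain ⟨S, hS, hcard⟩ := exists_finset_forall_embedding_notMem ({e | x ∘ e ∈ B} : Finset (κ ↪ ι))
  have hgood : ∀ e : κ ↪ ι, (∀ k, e k ∈ S) → x ∘ e ∉ B := by simpa using hS
  refine ⟨S.image x, by simp, fun y hy hyS => ?_, ?_⟩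
  · choose e heS hey using fun k => Finset.mem_image.1 (hyS k)
    have he : Function.Injective e := fun k l hkl => hy (by rw [← hey, ← hey, hkl])
    rw [← funext hey]
    exact hgood ⟨e, he⟩ heS
  -- A fibre of `x` with `card κ` elements would carry an embedding on which `x` is constant.
  · have hfiber : ∀ a ∈ S.image x, #{i ∈ S | x i = a} ≤ card κ := by
      intro a _
      by_contra! hlt
      obtain ⟨f⟩ : Nonempty (κ ↪ {i // i ∈ S.filter fun i => x i = a}) :=
        Function.Embedding.nonempty_of_card_le (by rw [Fintype.card_coe]; exact hlt.le)
      have hf (k : κ) := Finset.mem_filter.1 (f k).2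
      have hfa : x ∘ f.trans (Function.Embedding.subtype _) = Function.const κ a :=
        funext fun k => (hf k).2
      exact hgood _ (fun k => (hf k).1) (hfa ▸ hB a)
    have := Finset.card_le_mul_card_image S _ hfiber
    omega

variable [MeasurableSpace α] (μ : Measure α) [IsProbabilityMeasure μ]

theorem lintegral_pi_prod_eq_pow {f : α → ℝ≥0∞} (hf : Measurable f) :
    ∫⁻ x : ι → α, ∏ i, f (x i) ∂.pi (fun _ => μ) = (∫⁻ a, f a ∂μ) ^ card ι := by
  have hindep : iIndepFun (fun i (x : ι → α) => f (x i)) (.pi fun _ => μ) :=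
    iIndepFun_pi (X := fun _ => f) fun _ => hf.aemeasurable
  rw [lintegral_prod_eq_prod_lintegral_of_indepFun _ _ hindep fun _ => by fun_prop]
  simp only [(measurePreserving_eval (fun _ : ι => μ) _).lintegral_comp hf, Finset.prod_const,
    Finset.card_univ]

theorem measurePreserving_comp_embedding (e : κ ↪ ι) :
    MeasurePreserving (fun x : ι → α => x ∘ e) (.pi fun _ => μ) (.pi fun _ => μ) := by
  have hindep : iIndepFun (fun k (x : ι → α) => x (e k)) (.pi fun _ => μ) :=
    (iIndepFun_pi (X := fun _ => id) fun _ => aemeasurable_id).precomp e.injective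
  refine ⟨by fun_prop, ?_⟩
  rw [show (fun x : ι → α => x ∘ e) = fun x k => x (e k) from rfl,
    (iIndepFun_iff_map_fun_eq_pi_map fun _ => (measurable_pi_apply _).aemeasurable).1 hindep]
  simp only [(measurePreserving_eval (fun _ : ι => μ) _).map_eq]

open Classical in
theorem exists_forall_mem_card_embedding_le {A : Set α} (hA : ∀ᵐ a ∂μ, a ∈ A) {B : Set (κ → α)}
    (hB : MeasurableSet B) :
    ∃ x : ι → α, (∀ i, x i ∈ A) ∧
      (#{e : κ ↪ ι | x ∘ e ∈ B} : ℝ≥0∞) ≤ card ι ^ card κ * Measure.pi (fun _ => μ) B := by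
  have hcomp (e : κ ↪ ι) := measurePreserving_comp_embedding μ e
  have hmeas (e : κ ↪ ι) : Measurable fun x : ι → α => B.indicator (fun _ => (1 : ℝ≥0∞)) (x ∘ e) :=
    (measurable_const.indicator hB).comp (hcomp e).measurable
  have hsupp : ∀ᵐ x ∂Measure.pi fun _ : ι => μ, ∀ i, x i ∈ A :=
    ae_all_iff.2 fun _ => Measure.tendsto_eval_ae_ae.eventually hA
  obtain ⟨x, hxA, hx⟩ := exists_notMem_null_le_lintegral
    (Finset.measurable_fun_sum Finset.univ fun e _ => hmeas e).aemeasurable (ae_iff.1 hsupp)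
  refine ⟨x, by simpa using hxA, ?_⟩
  calc (#{e : κ ↪ ι | x ∘ e ∈ B} : ℝ≥0∞)
      = ∑ e : κ ↪ ι, B.indicator (fun _ => 1) (x ∘ e) := by simp [Set.indicator_apply]
    _ ≤ ∑ e : κ ↪ ι, ∫⁻ x : ι → α, B.indicator (fun _ => 1) (x ∘ e) ∂.pi fun _ => μ :=
      hx.trans_eq (lintegral_finsetSum _ fun e _ => hmeas e)
    _ = card (κ ↪ ι) * Measure.pi (fun _ => μ) B := by
      simp only [(hcomp _).lintegral_comp (measurable_const.indicator hB), 
        lintegral_indicator_const hB, one_mul, Finset.sum_const, Finset.card_univ, nsmul_eq_mul]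
    _ ≤ card ι ^ card κ * Measure.pi (fun _ => μ) B := by
      gcongr
      rw [Fintype.card_embedding_eq]
      exact_mod_cast Nat.descFactorial_le_pow _ _

theorem exists_finset_forall_injective_notMem_of_measure_le [Nonempty κ] {A : Set α}
    (hA : ∀ᵐ a ∂μ, a ∈ A) {B : Set (κ → α)} (hB : MeasurableSet B)
    (hconst : ∀ a, Function.const κ a ∈ B) {M : ℕ}
    (hM : 2 * ((M : ℝ≥0∞) ^ (card κ - 1) * Measure.pi (fun _ => μ) B) ≤ 1) :
    ∃ C : Finset α, (C : Set α) ⊆ A ∧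
      (∀ y : κ → α, Function.Injective y → (∀ k, y k ∈ C) → y ∉ B) ∧ M ≤ 2 * card κ * #C := by
  classical
  obtain ⟨x, hxA, hx⟩ := exists_forall_mem_card_embedding_le (ι := Fin M) μ hA hB
  obtain ⟨C, hCx, hCB, hcard⟩ := exists_finset_forall_injective_notMem x hconst
  refine ⟨C, hCx.trans (Set.range_subset_iff.2 hxA), hCB, ?_⟩
  have hbad : 2 * #{e : κ ↪ Fin M | x ∘ e ∈ B} ≤ M := by
    suffices (2 * #{e : κ ↪ Fin M | x ∘ e ∈ B} : ℝ≥0∞) ≤ M by exact_mod_cast this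
    calc (2 * #{e : κ ↪ Fin M | x ∘ e ∈ B} : ℝ≥0∞)
        ≤ 2 * (M ^ card κ * Measure.pi (fun _ => μ) B) := by simpa using mul_right_mono hx
      _ = M * (2 * (M ^ (card κ - 1) * Measure.pi (fun _ => μ) B)) := by
        rw [← mul_pow_sub_one (Fintype.card_ne_zero (α := κ))]
        ring
      _ ≤ M := mul_le_of_le_one_right' hM
  rw [Fintype.card_fin] at hcard
  linarith

end Expurgation

section AvgSqRadius

variable {ι V : Type*} [Fintype ι] [NormedAddCommGroup V] [InnerProductSpace ℝ V]

/-- The average squared radius `ol_rad²` of a finite family of points: the mean of their squared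
distances to their centroid. -/
noncomputable def avgSqRadius (x : ι → V) : ℝ :=
  (card ι : ℝ)⁻¹ * ∑ i, ‖x i - (card ι : ℝ)⁻¹ • ∑ i, x i‖ ^ 2

theorem avgSqRadius_const (v : V) : avgSqRadius (Function.const ι v) = 0 := by
  rcases isEmpty_or_nonempty ι with _ | _ <;>
    simp [avgSqRadius, ← Nat.cast_smul_eq_nsmul ℝ]

theorem sum_norm_sub_sq [Nonempty ι] (x : ι → V) (t : V) :
    ∑ i, ‖t - x i‖ ^ 2 =
      card ι * (avgSqRadius x + ‖t - (card ι : ℝ)⁻¹ • ∑ i, x i‖ ^ 2) := by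
  unfold avgSqRadius
  set m := (card ι : ℝ)⁻¹ • ∑ i, x i with hm
  have hsum : ∑ i, (x i - m) = 0 := by
    simp [hm, ← Nat.cast_smul_eq_nsmul ℝ]
  have hexpand (i : ι) :
      ‖t - x i‖ ^ 2 = ‖t - m‖ ^ 2 - 2 * inner ℝ (t - m) (x i - m) + ‖x i - m‖ ^ 2 := by
    rw [← norm_sub_sq_real, sub_sub_sub_cancel_right]
  simp only [hexpand, Finset.sum_add_distrib, Finset.sum_sub_distrib, ← Finset.mul_sum, ← inner_sum,
    hsum, inner_zero_right, Finset.sum_const, Finset.card_univ, nsmul_eq_mul]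
  field_simp
  ring

variable [FiniteDimensional ℝ V] [MeasurableSpace V] [BorelSpace V]

theorem measurable_avgSqRadius : Measurable (avgSqRadius : (ι → V) → ℝ) := by
  unfold avgSqRadius
  fun_prop

theorem lintegral_exp_neg_mul_norm_sub_sq {s : ℝ} (hs : 0 < s) (v : V) :
    ∫⁻ t, ENNReal.ofReal (Real.exp (-s * ‖t - v‖ ^ 2)) =
      ENNReal.ofReal ((Real.pi / s) ^ (finrank ℝ V / 2 : ℝ)) := by
  have hgauss := GaussianFourier.integral_rexp_neg_mul_sq_norm (V := V) hs
  have hpos : 0 < (Real.pi / s) ^ (finrank ℝ V / 2 : ℝ) := by positivity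
  rw [lintegral_sub_right_eq_self (fun t => ENNReal.ofReal (Real.exp (-s * ‖t‖ ^ 2))) v, ← hgauss,
    ofReal_integral_eq_lintegral_ofReal (.of_integral_ne_zero (hgauss ▸ hpos.ne'))
      (.of_forall fun _ => (Real.exp_pos _).le)]

/-- The auxiliary center `t` decouples the points: this is a Hubbard–Stratonovich
transformation. -/
theorem lintegral_prod_exp_neg_mul_norm_sub_sq [Nonempty ι] {s : ℝ} (hs : 0 < s) (x : ι → V) :
    ∫⁻ t, ∏ i, ENNReal.ofReal (Real.exp (-s * ‖t - x i‖ ^ 2)) =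
      ENNReal.ofReal (Real.exp (-s * (card ι * avgSqRadius x))) *
        ENNReal.ofReal ((Real.pi / (s * card ι)) ^ (finrank ℝ V / 2 : ℝ)) := by
  have : (0 : ℝ) < card ι := by exact_mod_cast Fintype.card_pos
  have hprod (t : V) : ∏ i, ENNReal.ofReal (Real.exp (-s * ‖t - x i‖ ^ 2)) =
      ENNReal.ofReal (Real.exp (-s * (card ι * avgSqRadius x))) *
        ENNReal.ofReal (Real.exp (-(s * card ι) * ‖t - (card ι : ℝ)⁻¹ • ∑ i, x i‖ ^ 2)) := by
    rw [← ENNReal.ofReal_prod_of_nonneg fun _ _ => (Real.exp_pos _).le, ← Real.exp_sum,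
      ← Finset.mul_sum, sum_norm_sub_sq, ← ENNReal.ofReal_mul (Real.exp_pos _).le, ← Real.exp_add]
    ring_nf
  simp_rw [hprod]
  rw [lintegral_const_mul _ (by fun_prop), lintegral_exp_neg_mul_norm_sub_sq (by positivity)]

variable {μ : Measure V} [IsProbabilityMeasure μ] {c : ℝ≥0∞}

theorem lintegral_lintegral_exp_pow_le (hμ : μ ≤ c • volume) {s : ℝ} (hs : 0 < s) {k : ℕ}
    (hk : k ≠ 0) :
    ∫⁻ t, (∫⁻ v, ENNReal.ofReal (Real.exp (-s * ‖t - v‖ ^ 2)) ∂μ) ^ k ≤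
      (c * ENNReal.ofReal ((Real.pi / s) ^ (finrank ℝ V / 2 : ℝ))) ^ (k - 1) *
        ENNReal.ofReal ((Real.pi / s) ^ (finrank ℝ V / 2 : ℝ)) := by
  set G := ENNReal.ofReal ((Real.pi / s) ^ (finrank ℝ V / 2 : ℝ))
  let I (t : V) : ℝ≥0∞ := ∫⁻ v, ENNReal.ofReal (Real.exp (-s * ‖t - v‖ ^ 2)) ∂μ
  have hI (t : V) : I t ≤ c * G := by
    calc I t ≤ ∫⁻ v, ENNReal.ofReal (Real.exp (-s * ‖t - v‖ ^ 2)) ∂(c • volume) :=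
          lintegral_mono' hμ le_rfl
      _ = c * G := by
        simp only [norm_sub_rev t, lintegral_smul_measure, smul_eq_mul,
          lintegral_exp_neg_mul_norm_sub_sq hs, G]
  have hmeas : Measurable (Function.uncurry fun t v : V =>
      ENNReal.ofReal (Real.exp (-s * ‖t - v‖ ^ 2))) := by
    unfold Function.uncurry
    fun_prop
  have htotal : ∫⁻ t, I t = G := by
    simp only [I, lintegral_lintegral_swap hmeas.aemeasurable, lintegral_exp_neg_mul_norm_sub_sq hs,
      lintegral_const, measure_univ, mul_one, G]
  calc ∫⁻ t, I t ^ k ≤ ∫⁻ t, (c * G) ^ (k - 1) * I t := by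
        gcongr with t
        rw [← pow_sub_one_mul hk]
        gcongr
        exact hI t
    _ = (c * G) ^ (k - 1) * G := by
      rw [lintegral_const_mul _ hmeas.lintegral_prod_right, htotal]

theorem lintegral_exp_neg_mul_avgSqRadius_le [Nonempty ι] (hμ : μ ≤ c • volume) {s : ℝ}
    (hs : 0 < s) :
    ∫⁻ x : ι → V, ENNReal.ofReal (Real.exp (-s * (card ι * avgSqRadius x))) ∂.pi (fun _ => μ) ≤
      ENNReal.ofReal ((card ι : ℝ) ^ (finrank ℝ V / 2 : ℝ)) *
        (c * ENNReal.ofReal ((Real.pi / s) ^ (finrank ℝ V / 2 : ℝ))) ^ (card ι - 1) := by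
  have hcard : (0 : ℝ) < card ι := by exact_mod_cast Fintype.card_pos
  set G := ENNReal.ofReal ((Real.pi / s) ^ (finrank ℝ V / 2 : ℝ)) with hG
  set H := ENNReal.ofReal ((Real.pi / (s * card ι)) ^ (finrank ℝ V / 2 : ℝ))
  have hH : H ≠ 0 := (ENNReal.ofReal_pos.2 (by positivity)).ne'
  have hGH : G = ENNReal.ofReal ((card ι : ℝ) ^ (finrank ℝ V / 2 : ℝ)) * H := by
    rw [← ENNReal.ofReal_mul (by positivity), ← Real.mul_rpow hcard.le (by positivity), hG]
    congr 2
    field_simp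
  have hmeas : Measurable (Function.uncurry fun (x : ι → V) (t : V) =>
      ∏ i, ENNReal.ofReal (Real.exp (-s * ‖t - x i‖ ^ 2))) := by
    unfold Function.uncurry
    fun_prop
  refine (ENNReal.mul_le_mul_iff_left hH ENNReal.ofReal_ne_top).1 ?_
  calc (∫⁻ x : ι → V, ENNReal.ofReal (Real.exp (-s * (card ι * avgSqRadius x))) ∂.pi fun _ => μ) * H
      = ∫⁻ x : ι → V, (∫⁻ t, ∏ i, ENNReal.ofReal (Real.exp (-s * ‖t - x i‖ ^ 2)))
          ∂.pi fun _ => μ := by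
        simp only [lintegral_prod_exp_neg_mul_norm_sub_sq hs]
        rw [lintegral_mul_const' _ _ ENNReal.ofReal_ne_top]
    _ = ∫⁻ t, (∫⁻ v, ENNReal.ofReal (Real.exp (-s * ‖t - v‖ ^ 2)) ∂μ) ^ card ι := by
      rw [lintegral_lintegral_swap hmeas.aemeasurable]
      exact lintegral_congr fun t =>
        lintegral_pi_prod_eq_pow μ (f := fun v => ENNReal.ofReal (Real.exp (-s * ‖t - v‖ ^ 2)))
          (by fun_prop)
    _ ≤ (c * G) ^ (card ι - 1) * G := lintegral_lintegral_exp_pow_le hμ hs Fintype.card_ne_zero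
    _ = ENNReal.ofReal ((card ι : ℝ) ^ (finrank ℝ V / 2 : ℝ)) * (c * G) ^ (card ι - 1) * H := by
      nth_rw 2 [hGH]
      ring

theorem measure_avgSqRadius_le_le [Nonempty ι] (hμ : μ ≤ c • volume) {s : ℝ} (hs : 0 < s)
    (r : ℝ) :
    Measure.pi (fun _ => μ) {x : ι → V | avgSqRadius x ≤ r} ≤
      ENNReal.ofReal (Real.exp (s * (card ι * r))) *
        (ENNReal.ofReal ((card ι : ℝ) ^ (finrank ℝ V / 2 : ℝ)) *
          (c * ENNReal.ofReal ((Real.pi / s) ^ (finrank ℝ V / 2 : ℝ))) ^ (card ι - 1)) := by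
  have hsub : {x : ι → V | avgSqRadius x ≤ r} ⊆
      {x | 1 ≤ ENNReal.ofReal (Real.exp (s * (card ι * r))) *
        ENNReal.ofReal (Real.exp (-s * (card ι * avgSqRadius x)))} := by
    intro x hx
    rw [Set.mem_ofPred_eq, ← ENNReal.ofReal_mul (Real.exp_pos _).le, ← Real.exp_add,
      ENNReal.one_le_ofReal, Real.one_le_exp_iff]
    have : s * (card ι * avgSqRadius x) ≤ s * (card ι * r) := by gcongr; exact hx
    linarith
  have hmeas : Measurable fun x : ι → V =>
      ENNReal.ofReal (Real.exp (-s * (card ι * avgSqRadius x))) := by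
    have := measurable_avgSqRadius (ι := ι) (V := V)
    fun_prop
  refine (measure_mono hsub).trans ?_
  grw [meas_ge_le_lintegral_div (hmeas.const_mul _).aemeasurable one_ne_zero ENNReal.one_ne_top,
    div_one, lintegral_const_mul _ hmeas, lintegral_exp_neg_mul_avgSqRadius_le hμ hs]

end AvgSqRadius

section RandomCoding

/-- The density, in nats per dimension, achieved by random coding with expurgation for lists of
size `L` and noise power `N`. -/
noncomputable def expurgatedDensity (L N : ℝ) : ℝ :=
  1 / 2 * Real.log ((L - 1) / (2 * Real.pi * Real.exp 1 * N * L)) - Real.log L / (2 * (L - 1))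

theorem exp_mul_rpow_mul_rpow_eq_exp_neg_expurgatedDensity {L N : ℝ} (hL : 1 < L) (hN : 0 < N)
    (d : ℝ) :
    Real.exp ((L - 1) / (2 * N * L) * (L * (d * N))) *
        (L ^ (d / 2) * ((Real.pi / ((L - 1) / (2 * N * L))) ^ (d / 2)) ^ (L - 1)) =
      Real.exp (-(d * expurgatedDensity L N)) ^ (L - 1) := by
  have hL' : 0 < L - 1 := sub_pos.2 hL
  have hL₀ : 0 < L := by linarith
  have := Real.pi_pos
  have hratio : (L - 1) / (2 * Real.pi * Real.exp 1 * N * L) =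
      (Real.exp 1 * (Real.pi / ((L - 1) / (2 * N * L))))⁻¹ := by field_simp
  rw [expurgatedDensity, hratio, Real.log_inv, Real.log_mul (by positivity) (by positivity),
    Real.log_exp, Real.rpow_def_of_pos hL₀, Real.rpow_def_of_pos (x := Real.pi / _) (by positivity),
    ← Real.exp_mul, ← Real.exp_mul, ← Real.exp_add, ← Real.exp_add]
  congr 1
  field_simp
  ring

variable {ι V : Type*} [Fintype ι] [NormedAddCommGroup V] [InnerProductSpace ℝ V]
  [FiniteDimensional ℝ V] [MeasurableSpace V] [BorelSpace V]

theorem measure_avgSqRadius_le_finrank_mul_le {μ : Measure V} [IsProbabilityMeasure μ] {c : ℝ≥0∞}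
    (hμ : μ ≤ c • volume) (hι : 1 < card ι) {N : ℝ} (hN : 0 < N) :
    Measure.pi (fun _ => μ) {x : ι → V | avgSqRadius x ≤ finrank ℝ V * N} ≤
      (c * ENNReal.ofReal (Real.exp (-(finrank ℝ V * expurgatedDensity (card ι) N)))) ^
        (card ι - 1) := by
  have : Nonempty ι := Fintype.card_pos_iff.1 (by omega)
  have hL : (1 : ℝ) < card ι := by exact_mod_cast hι
  have := sub_pos.2 hL
  -- This `s` minimises the Chernoff bound.
  set s : ℝ := (card ι - 1) / (2 * N * card ι) with hs
  refine (measure_avgSqRadius_le_le hμ (s := s) (by positivity) _).trans_eq ?_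
  have hexp := exp_mul_rpow_mul_rpow_eq_exp_neg_expurgatedDensity hL hN (finrank ℝ V)
  rw [← Nat.cast_pred (by omega), Real.rpow_natCast, Real.rpow_natCast, Nat.cast_pred (by omega),
    ← hs] at hexp
  rw [mul_pow, mul_pow, ← ENNReal.ofReal_pow (by positivity), ← ENNReal.ofReal_pow (by positivity),
    ← hexp, ENNReal.ofReal_mul (by positivity), ENNReal.ofReal_mul (by positivity)]
  ring

theorem exists_finset_forall_injective_lt_avgSqRadius (hι : 1 < card ι) {N : ℝ} (hN : 0 < N)
    {A : Set V} (hA : MeasurableSet A) (hA_top : volume A ≠ ∞) {M : ℕ}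
    (hM : 2 * M ≤
      volume A * ENNReal.ofReal (Real.exp (finrank ℝ V * expurgatedDensity (card ι) N))) :
    ∃ C : Finset V, (C : Set V) ⊆ A ∧
      (∀ x : ι → V, Function.Injective x → (∀ i, x i ∈ C) → finrank ℝ V * N < avgSqRadius x) ∧
      M ≤ 2 * card ι * #C := by
  have : Nonempty ι := Fintype.card_pos_iff.1 (by omega)
  rcases eq_or_ne M 0 with rfl | hM₀
  · exact ⟨∅, by simp, fun x _ hx => absurd (hx (Classical.arbitrary ι)) (by simp), by simp⟩
  have hA₀ : volume A ≠ 0 := by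
    intro h
    simp [h, hM₀] at hM
  have := cond_isProbabilityMeasure_of_finite hA₀ hA_top
  have hcond : cond volume A ≤ (volume A)⁻¹ • volume := by
    unfold ProbabilityTheory.cond
    gcongr
    exact Measure.restrict_le_self
  have hprob := measure_avgSqRadius_le_finrank_mul_le hcond hι hN
  rw [Real.exp_neg, ENNReal.ofReal_inv_of_pos (Real.exp_pos _),
    ← ENNReal.mul_inv (.inl hA₀) (.inl hA_top)] at hprob
  set W := volume A * ENNReal.ofReal (Real.exp (finrank ℝ V * expurgatedDensity (card ι) N))
  have hMW : 2 * (M * W⁻¹) ≤ 1 := by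
    rw [← mul_assoc, ← div_eq_mul_inv]
    exact ENNReal.div_le_of_le_mul (by rwa [one_mul])
  have hMW' : M * W⁻¹ ≤ 1 := (le_mul_of_one_le_left' one_le_two).trans hMW
  obtain ⟨C, hCA, hC, hcard⟩ := exists_finset_forall_injective_notMem_of_measure_le (cond volume A)
    (ae_cond_mem hA) (B := {x : ι → V | avgSqRadius x ≤ finrank ℝ V * N})
    (measurableSet_le measurable_avgSqRadius measurable_const)
    (fun v => (avgSqRadius_const v).trans_le (by positivity)) (M := M) <| by
      grw [hprob, ← mul_pow, pow_le_of_le_one zero_le hMW' (by omega), hMW]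
  exact ⟨C, hCA, fun x hx hxC => not_le.1 (hC x hx hxC), hcard⟩

end RandomCoding

section Cube

/-- The cube `[-K, K]ⁿ` as a subset of Euclidean space. -/
def euclideanCube (n : ℕ) (K : ℝ) : Set (EuclideanSpace ℝ (Fin n)) :=
  {v | ∀ j, v j ∈ Set.Icc (-K) K}

theorem euclideanCube_eq_preimage (n : ℕ) (K : ℝ) :
    euclideanCube n K = WithLp.ofLp ⁻¹' Set.Icc (fun _ => -K) fun _ => K := by
  ext v
  simp [euclideanCube, Pi.le_def, forall_and]

theorem measurableSet_euclideanCube (n : ℕ) (K : ℝ) : MeasurableSet (euclideanCube n K) := by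
  rw [euclideanCube_eq_preimage]
  exact (PiLp.volume_preserving_ofLp _).measurable measurableSet_Icc

theorem volume_euclideanCube (n : ℕ) (K : ℝ) :
    volume (euclideanCube n K) = ENNReal.ofReal (2 * K) ^ n := by
  rw [euclideanCube_eq_preimage,
    (PiLp.volume_preserving_ofLp _).measure_preimage measurableSet_Icc.nullMeasurableSet,
    Real.volume_Icc_pi]
  simp [two_mul]

theorem volume_euclideanCube_exp_neg_mul (n : ℕ) (ν : ℝ) :
    volume (euclideanCube n (Real.exp (-ν))) * ENNReal.ofReal (Real.exp (n * ν)) = 2 ^ n := by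
  rw [volume_euclideanCube, Real.exp_nat_mul, ENNReal.ofReal_pow (Real.exp_pos _).le, ← mul_pow,
    ← ENNReal.ofReal_mul (by positivity), mul_assoc, ← Real.exp_add]
  simp

theorem sub_log_div_le_inv_mul_log {n : ℕ} (hn : n ≠ 0) {a k : ℝ} (ha : 0 < a)
    (hk : 2 ^ n ≤ a * k) (ν : ℝ) :
    ν - Real.log a / n ≤ (n : ℝ)⁻¹ * Real.log (k / (2 * Real.exp (-ν)) ^ n) := by
  have hdensity : Real.exp (n * ν) / a ≤ k / (2 * Real.exp (-ν)) ^ n := by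
    rw [div_le_div_iff₀ ha (by positivity), mul_pow, ← Real.exp_nat_mul, mul_left_comm,
      ← Real.exp_add]
    simpa [mul_comm k] using hk
  have hlog := Real.log_le_log (by positivity) hdensity
  rw [Real.log_div (by positivity) ha.ne', Real.log_exp] at hlog
  have : (0 : ℝ) < n := by positivity
  rw [le_inv_mul_iff₀ this, mul_sub, mul_div_cancel₀ _ this.ne']
  exact hlog

end Cube

/-- For `N > 0`, `L ≥ 2` and `ε > 0`, for all sufficiently large `n` there
exist `K > 0` and a finite `C ⊆ [-K, K]^n` such that every `L`-element subset of `C` has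
average squared radius greater than `nN`, and the normalized logarithmic density
satisfies `(1/n) ln(|C| / (2K)^n) ≥ (1/2) ln((L-1)/(2πeNL)) - (ln L)/(2(L-1)) - ε`. -/
theorem finite_codebook_good_density (L : ℕ) (hL : 2 ≤ L) (N ε : ℝ)
    (hN : 0 < N) (hε : 0 < ε) :
    ∃ n₀ : ℕ, ∀ n : ℕ, n₀ ≤ n →
      ∃ K : ℝ, 0 < K ∧
        ∃ C : Finset (EuclideanSpace ℝ (Fin n)),
          (∀ c ∈ C, ∀ j, c j ∈ Set.Icc (-K) K) ∧
          (∀ x : Fin L → EuclideanSpace ℝ (Fin n), Function.Injective x →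
            (∀ i, x i ∈ C) →
            (n : ℝ) * N < (L : ℝ)⁻¹ * ∑ i, ‖x i - (L : ℝ)⁻¹ • ∑ i, x i‖ ^ 2) ∧
          (1 / 2 : ℝ) * Real.log (((L : ℝ) - 1) / (2 * Real.pi * Real.exp 1 * N * L))
              - Real.log L / (2 * ((L : ℝ) - 1)) - ε
            ≤ (n : ℝ)⁻¹ * Real.log ((C.card : ℝ) / (2 * K) ^ n) := by
  obtain ⟨n₀, hn₀⟩ := exists_nat_ge (Real.log (4 * L) / ε)
  refine ⟨n₀ + 1, fun n hn => ?_⟩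
  have hn_ne : n ≠ 0 := by omega
  set ν := expurgatedDensity L N
  have hvol := volume_euclideanCube_exp_neg_mul n ν
  obtain ⟨C, hC_cube, hC_radius, hC_card⟩ := exists_finset_forall_injective_lt_avgSqRadius
    (ι := Fin L) (M := 2 ^ (n - 1)) (by rwa [Fintype.card_fin]) hN
    (measurableSet_euclideanCube n (Real.exp (-ν))) (by rw [volume_euclideanCube]; finiteness)
    (by simpa [ν, mul_pow_sub_one hn_ne] using hvol.ge)
  refine ⟨Real.exp (-ν), Real.exp_pos _, C, fun c hc => hC_cube hc, fun x hx hxC => ?_, ?_⟩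
  · simpa [avgSqRadius] using hC_radius x hx hxC
  · have hcard : (2 : ℝ) ^ n ≤ 4 * L * #C := by
      rw [Fintype.card_fin] at hC_card
      rw [← mul_pow_sub_one hn_ne]
      have : (2 : ℝ) ^ (n - 1) ≤ 2 * L * #C := by exact_mod_cast hC_card
      linarith
    have hloss : Real.log (4 * L) / n ≤ ε := by
      rw [div_le_comm₀ (by positivity) hε]
      exact hn₀.trans (by exact_mod_cast (by omega : n₀ ≤ n))
    have hrate := sub_log_div_le_inv_mul_log hn_ne (by positivity) hcard ν
    change ν - ε ≤ _
    linarith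
end
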